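/- Let a k-SAT formula and a non-contradictory partial assignment x*:U→{0,1} be given, and let W be its frozen set (U together with all directly implied variables). Let i₀∈V∖W, s∈{0,1}, and let (U',x*') be the extended partial assignment with U'=U∪{i₀}, x*' agreeing with x* on U and x*'_{i₀}=s. Let D' be the derivation closure of (U',x*'), W' its frozen set (U' together with the variables directly implied by x*'_{U'}), and Z=W'∖W. Let G_Z be the subgraph of the factor graph induced by the variable set Z together with all clauses a∈F with ∂a∩Z≠∅, with the edges between them. If G_Z is acyclic (a tree), then (U',x*') is non-contradictory. -/

import Mathlib

open scoped Classical

/-- A k-SAT formula over variables `V` with clause set `A`: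
`scope a` is the set `∂a` of variables of clause `a`, and `z a i` is the
value of variable `i` that does NOT satisfy clause `a`. -/
structure KSAT (V A : Type) where
  scope : A → Finset V
  z : A → V → Bool

namespace KSAT

variable {V A : Type}

/-- `∂i`: clauses containing variable `i`. -/
noncomputable def nbr [Fintype A] (Φ : KSAT V A) (i : V) : Finset A :=
  Finset.univ.filter fun a => i ∈ Φ.scope a

/-- `∂₊i`: clauses in `∂i` with `z(i,a) = 1`. -/
noncomputable def nbrPos [Fintype A] (Φ : KSAT V A) (i : V) : Finset A :=
  (Φ.nbr i).filter fun a => Φ.z a i = true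

/-- `∂₋i`: clauses in `∂i` with `z(i,a) = 0`. -/
noncomputable def nbrNeg [Fintype A] (Φ : KSAT V A) (i : V) : Finset A :=
  (Φ.nbr i).filter fun a => Φ.z a i = false

/-- `∂₋i(a)`: clauses `b ∈ ∂i ∖ {a}` that disagree with `a` on the satisfying
value of `x_i`. -/
noncomputable def disag [Fintype A] [DecidableEq A] (Φ : KSAT V A) (i : V) (a : A) : Finset A :=
  ((Φ.nbr i).erase a).filter fun b => Φ.z b i = !Φ.z a i

/-- `∂₊i(a)`: clauses `b ∈ ∂i ∖ {a}` that agree with `a` on the satisfying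
value of `x_i`. -/
noncomputable def agree [Fintype A] [DecidableEq A] (Φ : KSAT V A) (i : V) (a : A) : Finset A :=
  ((Φ.nbr i).erase a).filter fun b => Φ.z b i = Φ.z a i

/-- Warning propagation update for a variable-to-clause message `𝔥_{i→a}`,
computed from the clause-to-variable messages `u`.  Messages take values in
`Bool`, with `false` standing for `0` and `true` for `I`. -/
noncomputable def stepH [Fintype A] [DecidableEq A] (Φ : KSAT V A) (U : Finset V)
    (xs : V → Bool) (u : A → V → Bool) (i : V) (a : A) : Bool :=
  decide ((i ∈ U ∧ xs i = Φ.z a i) ∨ ∃ b ∈ Φ.disag i a, u b i = true)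

/-- Warning propagation update for a clause-to-variable message `𝔲_{a→i}`,
computed from the variable-to-clause messages `h`. -/
noncomputable def stepU [DecidableEq V] (Φ : KSAT V A) (h : V → A → Bool)
    (a : A) (i : V) : Bool :=
  decide (∀ j ∈ (Φ.scope a).erase i, h j a = true)

/-- A WP fixed point: the update equations hold on every directed edge of the
factor graph. -/
def IsWPFixedPoint [Fintype A] [DecidableEq V] [DecidableEq A] (Φ : KSAT V A)
    (U : Finset V) (xs : V → Bool) (h : V → A → Bool) (u : A → V → Bool) : Prop :=
  ∀ a : A, ∀ i ∈ Φ.scope a,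
    h i a = Φ.stepH U xs u i a ∧ u a i = Φ.stepU h a i

end KSAT

namespace KSAT

/-- The derivation closure of the partial assignment `(U, xs)` under
unit-clause propagation: `Derived Φ U xs i v` means the pair `(i, v)` belongs
to the smallest set of (variable, value) pairs containing `(i, xs i)` for
every `i ∈ U` and closed under unit-clause propagation. -/
inductive Derived [DecidableEq V] (Φ : KSAT V A) (U : Finset V) (xs : V → Bool) :
    V → Bool → Prop
  | fixed (i : V) (hi : i ∈ U) : Derived Φ U xs i (xs i)
  | ucp (a : A) (i : V) (hia : i ∈ Φ.scope a)
      (hrest : ∀ j ∈ (Φ.scope a).erase i, Derived Φ U xs j (Φ.z a j)) :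
      Derived Φ U xs i (!Φ.z a i)

end KSAT

namespace KSAT

/-- The factor graph of a formula: the bipartite graph on `V ⊕ A` with an edge
between variable `i` and clause `a` iff `i ∈ ∂a`. -/
def factorGraph (Φ : KSAT V A) : SimpleGraph (V ⊕ A) :=
  SimpleGraph.fromRel fun x y =>
    match x, y with
    | Sum.inl i, Sum.inr a => i ∈ Φ.scope a
    | _, _ => False

/-- The frozen set of the partial assignment `(U, xs)`: the fixed variables
together with the directly implied ones. -/
def frozen [DecidableEq V] (Φ : KSAT V A) (U : Finset V) (xs : V → Bool) : Set V :=
  ↑U ∪ {i | ∃ v : Bool, Derived Φ U xs i v}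

/-- The partial assignment `(U, xs)` is contradictory: its derivation closure
contains both `(i,0)` and `(i,1)` for some variable `i`. -/
def Contradictory [DecidableEq V] (Φ : KSAT V A) (U : Finset V) (xs : V → Bool) : Prop :=
  ∃ i : V, Derived Φ U xs i false ∧ Derived Φ U xs i true

end KSAT

section ParGraph
variable {X : Type*} (G : SimpleGraph X)

/-- `y` is the parent of `x` in the forest `G` rooted at `r`. -/
def RPar (r x y : X) : Prop := G.Adj y x ∧ ∃ p : G.Walk r y, p.IsPath ∧ x ∉ p.support

theorem RPar.unique {G : SimpleGraph X} (hG : G.IsAcyclic) {r x y y' : X}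
    (h : RPar G r x y) (h' : RPar G r x y') : y = y' := by
  obtain ⟨a, p, hp, hx⟩ := h
  obtain ⟨a', p', hp', hx'⟩ := h'
  have h1 := hp.concat hx a
  have h2 := hp'.concat hx' a'
  have := hG.path_unique ⟨_, h1⟩ ⟨_, h2⟩
  have h3 := congrArg (fun q : G.Path r x => (q : G.Walk r x).penultimate) this
  simpa using h3

theorem RPar.root {G : SimpleGraph X} {r y : X} (h : RPar G r r y) : False := by
  obtain ⟨_, p, _, hx⟩ := h
  exact hx p.start_mem_support

theorem RPar.reach {G : SimpleGraph X} {r x y : X} (h : RPar G r x y) : G.Reachable r x := by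
  obtain ⟨a, p, _, _⟩ := h
  exact (p.concat a).reachable

theorem RPar.dich {G : SimpleGraph X} {r x y : X} (h : G.Reachable r x) (a : G.Adj x y) :
    RPar G r x y ∨ RPar G r y x := by
  obtain ⟨p, hp⟩ := h.exists_isPath
  by_cases hy : y ∈ p.support
  · left
    exact ⟨a.symm, p.takeUntil y hy, hp.takeUntil hy,
      SimpleGraph.Walk.endpoint_notMem_support_takeUntil hp hy a.ne⟩
  · right
    exact ⟨a, p, hp, hy⟩

end ParGraph

/-- Derivations along the rooted forest. -/
inductive TDer {V A : Type} [DecidableEq V] (Φ : KSAT V A) (U : Finset V) (xs : V → Bool)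
    (i₀ : V) (s : Bool) (Z : Set V) (P : V → A → Prop) : V → Bool → Prop
  | base (i : V) (v : Bool) (h : KSAT.Derived Φ U xs i v) : TDer Φ U xs i₀ s Z P i v
  | root : TDer Φ U xs i₀ s Z P i₀ s
  | tree (a : A) (i : V) (hP : P i a) (hZ : i ∈ Z) : TDer Φ U xs i₀ s Z P i (!Φ.z a i)

theorem tder_main {V A : Type} [DecidableEq V] (Φ : KSAT V A) (U : Finset V) (xs : V → Bool)
    (hnc : ¬ Φ.Contradictory U xs)
    (i₀ : V) (hi₀ : i₀ ∉ Φ.frozen U xs) (s : Bool) (Z : Set V)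
    (hZ : Z = Φ.frozen (insert i₀ U) (Function.update xs i₀ s) \ Φ.frozen U xs)
    (P : V → A → Prop) (Q : A → V → Prop) (R : V → Prop)
    (hP : ∀ i a b, P i a → P i b → a = b) (hQ : ∀ a i j, Q a i → Q a j → i = j)
    (hP0 : ∀ a, ¬ P i₀ a) (hR0 : R i₀) (hPR : ∀ i a, P i a → R i)
    (hd : ∀ i ∈ Z, ∀ a, i ∈ Φ.scope a → R i → P i a ∨ Q a i)
    (hRR : ∀ i ∈ Z, ∀ j ∈ Z, ∀ a, i ∈ Φ.scope a → j ∈ Φ.scope a → R i → R j) :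
    ¬ Φ.Contradictory (insert i₀ U) (Function.update xs i₀ s) := by
  have hW : ∀ i v, KSAT.Derived Φ U xs i v → i ∈ Φ.frozen U xs := fun i v h => Or.inr ⟨v, h⟩
  have hW' : ∀ i, i ∈ Φ.frozen U xs → ∃ v, KSAT.Derived Φ U xs i v := by
    rintro i (h | h)
    · exact ⟨_, .fixed i h⟩
    · exact h
  have hZW : ∀ i ∈ Z, i ∉ Φ.frozen U xs := by
    intro i hi; rw [hZ] at hi; exact hi.2
  have hi0Z : i₀ ∈ Z := by
    rw [hZ]; exact ⟨Or.inl (by simp), hi₀⟩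
  -- every pair is either old or new
  have hcase : ∀ i v, TDer Φ U xs i₀ s Z P i v → KSAT.Derived Φ U xs i v ∨ (i ∈ Z ∧ R i) := by
    intro i v h
    cases h with
    | base i v h => exact Or.inl h
    | root => exact Or.inr ⟨hi0Z, hR0⟩
    | tree a i h1 h2 => exact Or.inr ⟨h2, hPR _ _ h1⟩
  have hL : ∀ c a, c ∈ Z → TDer Φ U xs i₀ s Z P c (Φ.z a c) → ¬ P c a := by
    intro c a hc h hp
    generalize hv : Φ.z a c = v at h
    cases h with
    | base _ _ h => exact hZW c hc (hW _ _ h)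
    | root => exact hP0 _ hp
    | tree b _ h1 h2 =>
      have := hP _ _ _ hp h1
      subst this
      simp at hv
  have hmain : ∀ i v, KSAT.Derived Φ (insert i₀ U) (Function.update xs i₀ s) i v →
      TDer Φ U xs i₀ s Z P i v := by
    intro i v h
    induction h with
    | fixed i hi =>
      by_cases h : i = i₀
      · subst h; simpa using TDer.root
      · have hiU : i ∈ U := by simpa [h] using hi
        simpa [Function.update_of_ne h] using TDer.base i _ (.fixed i hiU)
    | ucp a i hia hrest ih =>
      have hiW' : i ∈ Φ.frozen (insert i₀ U) (Function.update xs i₀ s) :=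
        Or.inr ⟨_, .ucp a i hia hrest⟩
      by_cases hall : ∀ j ∈ (Φ.scope a).erase i, KSAT.Derived Φ U xs j (Φ.z a j)
      · exact .base _ _ (.ucp a i hia hall)
      push Not at hall
      obtain ⟨j0, hj0, hnd⟩ := hall
      have hj0a := Finset.mem_of_mem_erase hj0
      have hj0i := Finset.ne_of_mem_erase hj0
      obtain ⟨hj0Z, hj0R⟩ := (hcase _ _ (ih j0 hj0)).resolve_left hnd
      have hq0 := (hd j0 hj0Z a hj0a hj0R).resolve_left (hL _ _ hj0Z (ih j0 hj0))
      by_cases hiW : i ∈ Φ.frozen U xs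
      · obtain ⟨v, hv⟩ := hW' i hiW
        by_cases hvz : v = !Φ.z a i
        · subst hvz; exact .base _ _ hv
        have hvz : v = Φ.z a i := by
          revert hvz; cases v <;> cases Φ.z a i <;> simp
        subst hvz
        exfalso
        refine hZW j0 hj0Z (hW _ _ (.ucp a j0 hj0a ?_))
        intro j hj
        by_cases hji : j = i
        · subst hji; exact hv
        have hj' : j ∈ (Φ.scope a).erase i :=
          Finset.mem_erase.2 ⟨hji, Finset.mem_of_mem_erase hj⟩
        rcases hcase _ _ (ih j hj') with h | ⟨h1, h2⟩
        · exact h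
        · have hq := (hd j h1 a (Finset.mem_of_mem_erase hj) h2).resolve_left
            (hL _ _ h1 (ih j hj'))
          exact absurd (hQ _ _ _ hq hq0) (Finset.ne_of_mem_erase hj)
      · have hiZ : i ∈ Z := by rw [hZ]; exact ⟨hiW', hiW⟩
        rcases hd i hiZ a hia (hRR j0 hj0Z i hiZ a hj0a hia hj0R) with h | h
        · exact .tree a i h hiZ
        · exact absurd (hQ _ _ _ hq0 h) hj0i
  have huniq : ∀ i v w, TDer Φ U xs i₀ s Z P i v → TDer Φ U xs i₀ s Z P i w → v = w := by
    intro i v w h1 h2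
    have hDD : ∀ i v w, KSAT.Derived Φ U xs i v → KSAT.Derived Φ U xs i w → v = w := by
      intro i v w h1 h2
      by_contra hne
      apply hnc
      cases v <;> cases w <;> first | exact absurd rfl hne | exact ⟨i, h1, h2⟩ | exact ⟨i, h2, h1⟩
    cases h1 with
    | base _ _ h =>
      cases h2 with
      | base _ _ h' => exact hDD _ _ _ h h'
      | root => exact absurd (hW _ _ h) hi₀
      | tree a _ h1 h2 => exact absurd (hW _ _ h) (hZW _ h2)
    | root =>
      cases h2 with
      | base _ _ h' => exact absurd (hW _ _ h') hi₀
      | root => rfl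
      | tree a _ h1 h2 => exact absurd h1 (hP0 _)
    | tree a _ h3 h4 =>
      cases h2 with
      | base _ _ h' => exact absurd (hW _ _ h') (hZW _ h4)
      | root => exact absurd h3 (hP0 _)
      | tree b _ h1 h2 => rw [hP _ _ _ h1 h3]
  rintro ⟨i, h1, h2⟩
  exact absurd (huniq i _ _ (hmain _ _ h1) (hmain _ _ h2)) (by simp)

/-- fix one more variable `i₀ ∉ W` to the value `s`.  If the
subgraph of the factor graph induced by the newly frozen variables
`Z = W' ∖ W` together with all clauses touching `Z` is acyclic (a tree), then
the extended partial assignment is non-contradictory. -/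
theorem tree_implies_no_contradiction
    {V A : Type} [Fintype V] [Fintype A] [DecidableEq V] [DecidableEq A]
    (k : ℕ) (Φ : KSAT V A) (hk : ∀ a : A, (Φ.scope a).card = k)
    (U : Finset V) (xs : V → Bool)
    (hnc : ¬ Φ.Contradictory U xs)
    (i₀ : V) (hi₀ : i₀ ∉ Φ.frozen U xs) (s : Bool)
    (U' : Finset V) (hU' : U' = insert i₀ U)
    (xs' : V → Bool) (hxs' : xs' = Function.update xs i₀ s)
    (Z : Set V) (hZ : Z = Φ.frozen U' xs' \ Φ.frozen U xs)
    (S : Set (V ⊕ A))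
    (hS : S = Sum.inl '' Z ∪ Sum.inr '' {a : A | ∃ i ∈ Z, i ∈ Φ.scope a})
    (hacyc : (Φ.factorGraph.induce S).IsAcyclic) :
    ¬ Φ.Contradictory U' xs' := by
  subst hU' hxs'
  have hi0Z : i₀ ∈ Z := by
    rw [hZ]; exact ⟨Or.inl (by simp), hi₀⟩
  have hSv : ∀ i ∈ Z, (Sum.inl i : V ⊕ A) ∈ S := by
    intro i hi; rw [hS]; exact Or.inl ⟨i, hi, rfl⟩
  have hSa : ∀ i ∈ Z, ∀ a, i ∈ Φ.scope a → (Sum.inr a : V ⊕ A) ∈ S := by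
    intro i hi a ha; rw [hS]; exact Or.inr ⟨a, ⟨i, hi, ha⟩, rfl⟩
  have hadj : ∀ i a, i ∈ Φ.scope a → Φ.factorGraph.Adj (Sum.inl i) (Sum.inr a) := by
    intro i a h
    simp [KSAT.factorGraph, SimpleGraph.fromRel_adj, h]
  let r : S := ⟨Sum.inl i₀, hSv _ hi0Z⟩
  let G := Φ.factorGraph.induce S
  refine tder_main Φ U xs hnc i₀ hi₀ s Z hZ
    (fun i a => ∃ (h1 : Sum.inl i ∈ S) (h2 : Sum.inr a ∈ S), RPar G r ⟨_, h1⟩ ⟨_, h2⟩)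
    (fun a i => ∃ (h1 : Sum.inl i ∈ S) (h2 : Sum.inr a ∈ S), RPar G r ⟨_, h2⟩ ⟨_, h1⟩)
    (fun i => ∃ (h1 : Sum.inl i ∈ S), G.Reachable r ⟨_, h1⟩) ?_ ?_ ?_ ?_ ?_ ?_ ?_
  · rintro i a b ⟨_, _, h⟩ ⟨_, _, h'⟩
    simpa using RPar.unique hacyc h h'
  · rintro a i j ⟨_, _, h⟩ ⟨_, _, h'⟩
    simpa using RPar.unique hacyc h h'
  · rintro a ⟨_, _, h⟩
    exact RPar.root h
  · exact ⟨hSv _ hi0Z, SimpleGraph.Reachable.refl _⟩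
  · rintro i a ⟨h1, _, h⟩
    exact ⟨h1, RPar.reach h⟩
  · rintro i hi a hia ⟨h1, h⟩
    have h2 := hSa i hi a hia
    have ad : G.Adj ⟨_, h1⟩ ⟨_, h2⟩ := hadj i a hia
    rcases RPar.dich h ad with h | h
    · exact Or.inl ⟨h1, h2, h⟩
    · exact Or.inr ⟨h1, h2, h⟩
  · rintro i hi j hj a hia hja ⟨h1, h⟩
    have h2 := hSa i hi a hia
    have h3 := hSv j hj
    have ad : G.Adj ⟨_, h1⟩ ⟨_, h2⟩ := hadj i a hia
    have ad' : G.Adj ⟨_, h3⟩ ⟨_, h2⟩ := hadj j a hja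
    exact ⟨h3, (h.trans ad.reachable).trans ad'.symm.reachable⟩
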